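/- Let (Z, 𝒵) and (E, ℰ) be measurable spaces, let η be a Markov kernel from Z to E, let ν be a probability measure on Z, let D ∈ 𝒵, let μ₁ be a probability measure on E, and let c > 0. Assume that for every z ∈ D the Markov–Dobrushin overlap satisfies ∫_E min(dη(z,·)/dμ₁, 1) dμ₁ ≥ c. Then the mixture νη (defined by νη(A) = ∫_Z η(z, A) ν(dz)) satisfies ∫_E min(d(νη)/dμ₁, 1) dμ₁ ≥ c · ν(D). (This is the abstract form of the corollary deriving a Markov–Dobrushin condition for the time-one marginals of a diffusion from the Markov–Dobrushin condition for the conditional laws given the position at an intermediate time ε, with ν the law of X_ε and D the ball where the Harnack-based bound applies.) -/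

import Mathlib

open MeasureTheory
open scoped ENNReal

/-- The overlap `∫ min(dα/dβ, 1) dβ` is at most `α A + β Aᶜ` for every measurable set `A`. -/
theorem lintegral_min_rnDeriv_one_le {E : Type*} [MeasurableSpace E] (α β : Measure E)
    {A : Set E} (hA : MeasurableSet A) :
    ∫⁻ x, min (α.rnDeriv β x) 1 ∂β ≤ α A + β Aᶜ := by
  rw [← lintegral_add_compl _ hA]
  gcongr
  · exact (lintegral_mono fun x => min_le_left _ _).trans (Measure.setLIntegral_rnDeriv_le A)
  · exact (lintegral_mono fun x => min_le_right _ _).trans (setLIntegral_one _).le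

/-- The bound `lintegral_min_rnDeriv_one_le` is attained. -/
theorem exists_measurableSet_add_compl_le_lintegral_min_rnDeriv_one
    {E : Type*} [MeasurableSpace E] (α β : Measure E) [α.HaveLebesgueDecomposition β] :
    ∃ A, MeasurableSet A ∧ α A + β Aᶜ ≤ ∫⁻ x, min (α.rnDeriv β x) 1 ∂β := by
  obtain ⟨S, hS, hαS, hβS⟩ := Measure.mutuallySingular_singularPart α β
  have hL : MeasurableSet {x | α.rnDeriv β x ≤ 1} :=
    measurableSet_le (Measure.measurable_rnDeriv α β) measurable_const
  have hA : MeasurableSet ({x | α.rnDeriv β x ≤ 1} ∩ S) := hL.inter hS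
  refine ⟨_, hA, ?_⟩
  rw [← lintegral_add_compl _ hA]
  gcongr
  · calc α ({x | α.rnDeriv β x ≤ 1} ∩ S)
        = ∫⁻ x in {x | α.rnDeriv β x ≤ 1} ∩ S, α.rnDeriv β x ∂β := by
          rw [← withDensity_apply _ hA]
          have hadd := congrArg (fun m : Measure E => m ({x | α.rnDeriv β x ≤ 1} ∩ S))
            (Measure.singularPart_add_rnDeriv α β)
          simpa [measure_mono_null Set.inter_subset_right hαS] using hadd.symm
      _ ≤ ∫⁻ x in {x | α.rnDeriv β x ≤ 1} ∩ S, min (α.rnDeriv β x) 1 ∂β :=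
          setLIntegral_mono' hA fun x hx => le_min le_rfl hx.1
  · rw [← setLIntegral_one]
    refine lintegral_mono_ae ((ae_restrict_iff' hA.compl).2 ?_)
    filter_upwards [mem_ae_iff.2 hβS] with x hxS hx
    exact le_min (not_le.1 fun hle => hx ⟨hle, hxS⟩).le le_rfl

/-- Abstract form of the corollary deriving a Markov–Dobrushin condition for mixtures: if the
Markov–Dobrushin overlap of `η(z,·)` with `μ₁` is at least `c` for every `z` in a measurable
set `D`, then the mixture `νη = ∫ η(z,·) ν(dz)` satisfies
`∫ min(d(νη)/dμ₁, 1) dμ₁ ≥ c · ν(D)`. -/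
theorem markov_dobrushin_for_mixture
    {Z E : Type*} [MeasurableSpace Z] [MeasurableSpace E]
    (η : ProbabilityTheory.Kernel Z E) [ProbabilityTheory.IsMarkovKernel η]
    (ν : Measure Z) [IsProbabilityMeasure ν] {D : Set Z} (hD : MeasurableSet D)
    (μ₁ : Measure E) [IsProbabilityMeasure μ₁] (c : ℝ≥0∞) (hc : 0 < c)
    (h : ∀ z ∈ D, c ≤ ∫⁻ x, min ((η z).rnDeriv μ₁ x) 1 ∂μ₁) :
    c * ν D ≤ ∫⁻ x, min ((ν.bind (fun z => η z)).rnDeriv μ₁ x) 1 ∂μ₁ := by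
  have : IsFiniteMeasure (ν.bind (fun z => η z)) :=
    inferInstanceAs (IsFiniteMeasure (ν.bind η))
  obtain ⟨A, hA, hle⟩ :=
    exists_measurableSet_add_compl_le_lintegral_min_rnDeriv_one (ν.bind (fun z => η z)) μ₁
  calc c * ν D = ∫⁻ _ in D, c ∂ν := (setLIntegral_const _ _).symm
    _ ≤ ∫⁻ z in D, (η z A + μ₁ Aᶜ) ∂ν :=
        setLIntegral_mono' hD fun z hz => (h z hz).trans (lintegral_min_rnDeriv_one_le _ _ hA)
    _ ≤ ∫⁻ z, (η z A + μ₁ Aᶜ) ∂ν := setLIntegral_le_lintegral _ _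
    _ = ν.bind (fun z => η z) A + μ₁ Aᶜ := by
        rw [lintegral_add_right _ measurable_const, lintegral_const, measure_univ, mul_one,
          Measure.bind_apply hA η.measurable.aemeasurable]
    _ ≤ _ := hle
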